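/- The topological product S4.1 ×_t S4 is strictly larger than the fusion: S4.1 ×_t S4 ≠ S4.1 ∗ S4. -/

import Mathlib

/- ============== Formulas ============== -/

/-- Unimodal formulas. -/
inductive MForm : Type
  | var : ℕ → MForm
  | bot : MForm
  | imp : MForm → MForm → MForm
  | box : MForm → MForm

namespace MForm
def neg (A : MForm) : MForm := A.imp .bot
def dia (A : MForm) : MForm := (MForm.box A.neg).neg
def subst (σ : ℕ → MForm) : MForm → MForm
  | var n => σ n
  | bot => bot
  | imp A B => (subst σ A).imp (subst σ B)
  | box A => MForm.box (subst σ A)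
end MForm

/-- Bimodal formulas (`box 0` is □₁ and `box 1` is □₂). -/
inductive BForm : Type
  | var : ℕ → BForm
  | bot : BForm
  | imp : BForm → BForm → BForm
  | box : Fin 2 → BForm → BForm

namespace BForm
def neg (A : BForm) : BForm := A.imp .bot
def dia (i : Fin 2) (A : BForm) : BForm := (BForm.box i A.neg).neg
def subst (σ : ℕ → BForm) : BForm → BForm
  | var n => σ n
  | bot => bot
  | imp A B => (subst σ A).imp (subst σ B)
  | box i A => BForm.box i (subst σ A)
end BForm

/-- Translation of a unimodal formula into the bimodal language,
reading □ as □ᵢ. -/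
def MForm.toB (i : Fin 2) : MForm → BForm
  | .var n => .var n
  | .bot => .bot
  | .imp A B => (MForm.toB i A).imp (MForm.toB i B)
  | .box A => BForm.box i (MForm.toB i A)

/- ============== Normal modal logics ============== -/

/-- Provability in the smallest normal unimodal logic containing the axioms `Ax`:
classical tautologies (via a Hilbert axiomatization), the normality axiom,
modus ponens, necessitation and uniform substitution. -/
inductive MProv (Ax : Set MForm) : MForm → Prop
  | axm {A : MForm} : A ∈ Ax → MProv Ax A
  | pl1 {A B : MForm} : MProv Ax (A.imp (B.imp A))
  | pl2 {A B C : MForm} : MProv Ax ((A.imp (B.imp C)).imp ((A.imp B).imp (A.imp C)))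
  | pl3 {A : MForm} : MProv Ax ((A.neg.neg).imp A)
  | kax {A B : MForm} : MProv Ax ((MForm.box (A.imp B)).imp ((MForm.box A).imp (MForm.box B)))
  | mp {A B : MForm} : MProv Ax (A.imp B) → MProv Ax A → MProv Ax B
  | nec {A : MForm} : MProv Ax A → MProv Ax (MForm.box A)
  | subst {A : MForm} (σ : ℕ → MForm) : MProv Ax A → MProv Ax (A.subst σ)

/-- Provability in the smallest normal bimodal logic containing the axioms `Ax`. -/
inductive BProv (Ax : Set BForm) : BForm → Prop
  | axm {A : BForm} : A ∈ Ax → BProv Ax A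
  | pl1 {A B : BForm} : BProv Ax (A.imp (B.imp A))
  | pl2 {A B C : BForm} : BProv Ax ((A.imp (B.imp C)).imp ((A.imp B).imp (A.imp C)))
  | pl3 {A : BForm} : BProv Ax ((A.neg.neg).imp A)
  | kax (i : Fin 2) {A B : BForm} :
      BProv Ax ((BForm.box i (A.imp B)).imp ((BForm.box i A).imp (BForm.box i B)))
  | mp {A B : BForm} : BProv Ax (A.imp B) → BProv Ax A → BProv Ax B
  | nec (i : Fin 2) {A : BForm} : BProv Ax A → BProv Ax (BForm.box i A)
  | subst {A : BForm} (σ : ℕ → BForm) : BProv Ax A → BProv Ax (A.subst σ)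

/-- The propositional letter p. -/
def pM : MForm := .var 0

/-- Axioms of S4 : □p→p and □p→□□p. -/
def S4Ax : Set MForm := {(MForm.box pM).imp pM, (MForm.box pM).imp (MForm.box (MForm.box pM))}

/-- The McKinsey axiom □◇p→◇□p. -/
def McKM : MForm := (MForm.box pM.dia).imp (MForm.box pM).dia

/-- The logic S4. -/
def S4L : Set MForm := {A | MProv S4Ax A}

/-- The logic S4.1 = S4 + McKinsey. -/
def S41L : Set MForm := {A | MProv (S4Ax ∪ {McKM}) A}

/-- Axioms of the fusion S4.1 ∗ S4 : all theorems of S4.1 read with □₁ together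
with all theorems of S4 read with □₂. -/
def FusionAx : Set BForm := (MForm.toB 0 '' S41L) ∪ (MForm.toB 1 '' S4L)

/-- The fusion S4.1 ∗ S4 (as a normal bimodal logic). -/
def FusionL : Set BForm := {A | BProv FusionAx A}

def pB : BForm := .var 0

/-- The formula ◇₁□₂(◇₁p → □₁p). -/
def MKB : BForm := BForm.dia 0 (BForm.box 1 ((BForm.dia 0 pB).imp (BForm.box 0 pB)))

/-- The logic L = S4.1 ∗ S4 + ◇₁□₂(◇₁p → □₁p). -/
def LL : Set BForm := {A | BProv (FusionAx ∪ {MKB}) A}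

/- ============== Kripke semantics ============== -/

/-- Truth of a bimodal formula at a point of a Kripke 2-frame `(W, R 0, R 1)`
under valuation `V`. -/
def BSat {W : Type} (R : Fin 2 → W → W → Prop) (V : ℕ → W → Prop) : W → BForm → Prop
  | x, .var n => V n x
  | _, .bot => False
  | x, .imp A B => BSat R V x A → BSat R V x B
  | x, .box i A => ∀ y, R i x y → BSat R V y A

/-- Frame validity for bimodal formulas. -/
def BValid {W : Type} (R : Fin 2 → W → W → Prop) (A : BForm) : Prop :=
  ∀ (V : ℕ → W → Prop) (x : W), BSat R V x A

/-- Truth of a unimodal formula at a point of a Kripke frame. -/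
def MKSat {W : Type} (R : W → W → Prop) (V : ℕ → W → Prop) : W → MForm → Prop
  | x, .var n => V n x
  | _, .bot => False
  | x, .imp A B => MKSat R V x A → MKSat R V x B
  | x, .box A => ∀ y, R x y → MKSat R V y A

/-- Frame validity for unimodal formulas. -/
def MKValid {W : Type} (R : W → W → Prop) (A : MForm) : Prop :=
  ∀ (V : ℕ → W → Prop) (x : W), MKSat R V x A

/- ============== Topological semantics ============== -/

/-- Topological truth of a unimodal formula: □A holds at `x` iff some open
neighbourhood of `x` satisfies `A` everywhere. -/
def MTSat {X : Type} (t : TopologicalSpace X) (V : ℕ → X → Prop) : X → MForm → Prop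
  | x, .var n => V n x
  | _, .bot => False
  | x, .imp A B => MTSat t V x A → MTSat t V x B
  | x, .box A => ∃ U : Set X, t.IsOpen U ∧ x ∈ U ∧ ∀ y ∈ U, MTSat t V y A

/-- Topological validity for unimodal formulas. -/
def MTValid {X : Type} (t : TopologicalSpace X) (A : MForm) : Prop :=
  ∀ (V : ℕ → X → Prop) (x : X), MTSat t V x A

/-- Bitopological truth of a bimodal formula: □ᵢ is interpreted via the
topology `t i`. -/
def BTSat {X : Type} (t : Fin 2 → TopologicalSpace X) (V : ℕ → X → Prop) : X → BForm → Prop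
  | x, .var n => V n x
  | _, .bot => False
  | x, .imp A B => BTSat t V x A → BTSat t V x B
  | x, .box i A => ∃ U : Set X, (t i).IsOpen U ∧ x ∈ U ∧ ∀ y ∈ U, BTSat t V y A

/-- Bitopological validity for bimodal formulas. -/
def BTValid {X : Type} (t : Fin 2 → TopologicalSpace X) (A : BForm) : Prop :=
  ∀ (V : ℕ → X → Prop) (x : X), BTSat t V x A

/-- The horizontal topology on `X × Y`: generated by the base
`{U × {y} : U open in X, y ∈ Y}`. -/
def horiz {X Y : Type} (t : TopologicalSpace X) : TopologicalSpace (X × Y) :=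
  TopologicalSpace.generateFrom
    {S | ∃ (U : Set X) (y : Y), t.IsOpen U ∧ S = U ×ˢ ({y} : Set Y)}

/-- The vertical topology on `X × Y`: generated by the base
`{{x} × U : x ∈ X, U open in Y}`. -/
def vert {X Y : Type} (t : TopologicalSpace Y) : TopologicalSpace (X × Y) :=
  TopologicalSpace.generateFrom
    {S | ∃ (x : X) (U : Set Y), t.IsOpen U ∧ S = ({x} : Set X) ×ˢ U}

/-- The topological product `L₁ ×ₜ L₂` of two unimodal logics: the set of all
bimodal formulas valid in every bitopological product `𝔛₁ × 𝔛₂` of (nonempty)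
topological spaces with `𝔛₁ ⊨ L₁` and `𝔛₂ ⊨ L₂`. -/
def TopProdLogic (L1 L2 : Set MForm) : Set BForm :=
  {A | ∀ (X Y : Type) (t1 : TopologicalSpace X) (t2 : TopologicalSpace Y),
      Nonempty X → Nonempty Y →
      (∀ B ∈ L1, MTValid t1 B) → (∀ B ∈ L2, MTValid t2 B) →
      BTValid ![horiz t1, vert t2] A}

/-- The Alexandrov topology of a (reflexive transitive) relation `R`:
the topology with base `{R(x) : x ∈ W}`. -/
def alexandrov {W : Type} (R : W → W → Prop) : TopologicalSpace W :=
  TopologicalSpace.generateFrom {S | ∃ x, S = {t | R x t}}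

/-- A space is weakly scattered if every nonempty open set contains an
isolated point. -/
def WeaklyScattered {X : Type} (t : TopologicalSpace X) : Prop :=
  ∀ U : Set X, t.IsOpen U → U.Nonempty → ∃ x ∈ U, t.IsOpen ({x} : Set X)

/-- p-morphism between Kripke 1-frames. -/
def IsPMorphism {W U : Type} (R : W → W → Prop) (S : U → U → Prop) (f : W → U) : Prop :=
  Function.Surjective f ∧ (∀ x y, R x y → S (f x) (f y)) ∧
    (∀ x u, S (f x) u → ∃ y, R x y ∧ f y = u)

/-- p-morphism between Kripke 2-frames. -/
def IsPMorphism2 {W U : Type} (R1 R2 : W → W → Prop) (S1 S2 : U → U → Prop)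
    (f : W → U) : Prop :=
  Function.Surjective f ∧
    (∀ x y, R1 x y → S1 (f x) (f y)) ∧ (∀ x u, S1 (f x) u → ∃ y, R1 x y ∧ f y = u) ∧
    (∀ x y, R2 x y → S2 (f x) (f y)) ∧ (∀ x u, S2 (f x) u → ∃ y, R2 x y ∧ f y = u)

/- ============== The frames 𝕋₂,₂ and 𝕋₂,₂₊₂ ============== -/

/-- The four-letter alphabet {a₁,a₂,b₁,b₂}: `(false, i)` is the a-letter `aᵢ₊₁`
and `(true, i)` is the b-letter `bᵢ₊₁`. -/
abbrev Letter : Type := Bool × Fin 2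

/-- `T₂,₂ = {a₁,a₂,b₁,b₂}*`. -/
abbrev T22 : Type := List Letter

/-- `T₂ = {1,2}*`. -/
abbrev T2W : Type := List (Fin 2)

/-- First relation of `𝕋₂,₂`: append a word over the a-letters. -/
def R1T (w w' : T22) : Prop := ∃ c : T22, (∀ l ∈ c, l.1 = false) ∧ w' = w ++ c

/-- Second relation of `𝕋₂,₂`: append a word over the b-letters. -/
def R2T (w w' : T22) : Prop := ∃ d : T22, (∀ l ∈ d, l.1 = true) ∧ w' = w ++ d

/-- The carrier of `𝕋₂,₂₊₂` : `⟨a, root⟩` is encoded as `(a, none)` and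
`⟨a, b⟩` with `b ∈ T₂` as `(a, some b)`. -/
abbrev W222 : Type := T22 × Option T2W

/-- Generators of `R₁′`. -/
def R1'gen : W222 → W222 → Prop := fun x y =>
  (∃ a a', R1T a a' ∧ x = (a, none) ∧ y = (a', none)) ∨
  (∃ a, x = (a, none) ∧ y = (a, some ([] : T2W)))

/-- `R₁′`: smallest reflexive transitive relation containing the generators. -/
def R1' : W222 → W222 → Prop := Relation.ReflTransGen R1'gen

/-- Generators of `R₂′`. -/
def R2'gen : W222 → W222 → Prop := fun x y =>
  (∃ a a', R2T a a' ∧ x = (a, none) ∧ y = (a', none)) ∨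
  (∃ a b b', b <+: b' ∧ x = (a, some b) ∧ y = (a, some b'))

/-- `R₂′`: smallest reflexive transitive relation containing the generators. -/
def R2' : W222 → W222 → Prop := Relation.ReflTransGen R2'gen

/- ============== Pseudo-infinite paths and the spaces 𝒴 and 𝔛 ============== -/

/-- Infinite sequences over {0,1,2}: `none` encodes 0 and `some i` encodes
`i+1 ∈ {1,2}`. -/
abbrev Seq3 : Type := ℕ → Option (Fin 2)

/-- `W_ω`: pseudo-infinite paths, i.e. sequences with finitely many nonzero
entries. -/
def Wom : Type := {s : Seq3 // {k | s k ≠ none}.Finite}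

/-- `st(s)`: the least `N` such that all entries from `N` on are zero. -/
noncomputable def stN {γ : Type} (s : ℕ → Option γ) : ℕ :=
  sInf {N | ∀ k, N ≤ k → s k = none}

/-- The first `k` entries of a sequence, as a finite word. -/
def takeSeq {γ : Type} (s : ℕ → Option γ) (k : ℕ) : List (Option γ) :=
  List.ofFn (fun i : Fin k => s i.1)

/-- `f_F`: delete all zeros from a finite word. -/
def fF {γ : Type} (l : List (Option γ)) : List γ := l.filterMap id

/-- `f_ω`: delete the zeros from a pseudo-infinite path, producing a finite word. -/
noncomputable def squash {γ : Type} (s : ℕ → Option γ) : List γ := fF (takeSeq s (stN s))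

/-- The basic set `U_k(α) = {β ∈ W_ω : α↾k = β↾k and f_F(α↾k) ⊑ f_ω(β)}`. -/
def Uset (α : Wom) (k : ℕ) : Set Wom :=
  {β | takeSeq β.1 k = takeSeq α.1 k ∧ fF (takeSeq α.1 k) <+: squash β.1}

/-- The topology `T_ω` on `W_ω` generated by the base `{U_k(α) : k > 0}`;
`𝒴 = (W_ω, T_ω)`. -/
def Tom : TopologicalSpace Wom :=
  TopologicalSpace.generateFrom {S | ∃ α k, 0 < k ∧ S = Uset α k}

/-- The basic sets of the space `𝔛`:
`U′_k(α,0) = (U_k(α) × {0}) ∪ (U_k(α) × {n ≥ k})` and `U′_k(α,n) = {⟨α,n⟩}`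
for `n ≥ 1`. -/
def U'set (α : Wom) (k n : ℕ) : Set (Wom × ℕ) :=
  if n = 0 then (Uset α k ×ˢ ({0} : Set ℕ)) ∪ (Uset α k ×ˢ {m : ℕ | k ≤ m})
  else {(α, n)}

/-- The topology of the space `𝔛 = (W_ω × ℕ, T)`. -/
def TX : TopologicalSpace (Wom × ℕ) :=
  TopologicalSpace.generateFrom {S | ∃ α k n, S = U'set α k n}

/-- Interleaving of two paths: the sequence `a_{x₁} b_{y₁} a_{x₂} b_{y₂} …`
(with `a₀ = b₀ = 0`). -/
def interleave (α β : Seq3) : ℕ → Option Letter := fun n =>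
  if n % 2 = 0 then (α (n / 2)).map (fun v => ((false, v) : Letter))
  else (β (n / 2)).map (fun v => ((true, v) : Letter))

/-- The map `g : W_ω × W_ω → T₂,₂` obtained by interleaving and deleting zeros. -/
noncomputable def gmap (α β : Seq3) : T22 := squash (interleave α β)

/-- `g` as a map on pairs. -/
noncomputable def gPair : Wom × Wom → T22 := fun q => gmap q.1.1 q.2.1

/-- `s↾n · 0^ω`. -/
def truncSeq (s : Seq3) (n : ℕ) : Seq3 := fun k => if k < n then s k else none

/-- The tail `γ` of `s = s↾n · γ`. -/
def shiftSeq (s : Seq3) (n : ℕ) : Seq3 := fun k => s (n + k)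

/-- The map `f : 𝔛 × 𝒴 → 𝕋₂,₂₊₂` :
`f(⟨α,0⟩,β) = ⟨g(α,β), root⟩` and for `n ≥ 1`,
`f(⟨α,n⟩,β) = ⟨g(α↾n·0^ω, β↾n·0^ω), f_ω(γ)⟩` where `β = β↾n·γ`. -/
noncomputable def fXY : (Wom × ℕ) × Wom → W222 := fun q =>
  if q.1.2 = 0 then (gmap q.1.1.1 q.2.1, none)
  else (gmap (truncSeq q.1.1.1 q.1.2) (truncSeq q.2.1 q.1.2),
        some (squash (shiftSeq q.2.1 q.1.2)))

/-- An effective encoding of bimodal formulas by natural numbers. -/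
def encodeB : BForm → ℕ
  | .var n => Nat.pair 0 n
  | .bot => Nat.pair 1 0
  | .imp A B => Nat.pair 2 (Nat.pair (encodeB A) (encodeB B))
  | .box i A => Nat.pair 3 (Nat.pair i.1 (encodeB A))

/-! ### A formula separating the two logics: `◇₁□₂ Grz₁` -/

/-- The Grzegorczyk formula for `□₁`. -/
def GrzB : BForm :=
  (BForm.box 0 ((BForm.box 0 (pB.imp (BForm.box 0 pB))).imp pB)).imp pB

/-- The formula `◇₁□₂ Grz₁`. -/
def SepB : BForm := BForm.dia 0 (BForm.box 1 GrzB)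

/-! ### Soundness for Kripke frames -/

theorem MKSat_subst {W : Type} (R : W → W → Prop) (V : ℕ → W → Prop) (σ : ℕ → MForm)
    (A : MForm) : ∀ x, MKSat R V x (A.subst σ) ↔ MKSat R (fun n y => MKSat R V y (σ n)) x A := by
  induction A with
  | var n => intro x; simp [MForm.subst, MKSat]
  | bot => intro x; simp [MForm.subst, MKSat]
  | imp A B ihA ihB => intro x; simp [MForm.subst, MKSat, ihA, ihB]
  | box A ih => intro x; simp [MForm.subst, MKSat, ih]

theorem BSat_subst {W : Type} (R : Fin 2 → W → W → Prop) (V : ℕ → W → Prop) (σ : ℕ → BForm)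
    (A : BForm) : ∀ x, BSat R V x (A.subst σ) ↔ BSat R (fun n y => BSat R V y (σ n)) x A := by
  induction A with
  | var n => intro x; simp [BForm.subst, BSat]
  | bot => intro x; simp [BForm.subst, BSat]
  | imp A B ihA ihB => intro x; simp [BForm.subst, BSat, ihA, ihB]
  | box i A ih => intro x; simp [BForm.subst, BSat, ih]

theorem BSat_toB {W : Type} (R : Fin 2 → W → W → Prop) (V : ℕ → W → Prop) (i : Fin 2)
    (A : MForm) : ∀ x, BSat R V x (A.toB i) ↔ MKSat (R i) V x A := by
  induction A with
  | var n => intro x; simp [MForm.toB, BSat, MKSat]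
  | bot => intro x; simp [MForm.toB, BSat, MKSat]
  | imp A B ihA ihB => intro x; simp [MForm.toB, BSat, MKSat, ihA, ihB]
  | box A ih => intro x; simp [MForm.toB, BSat, MKSat, ih]

theorem MProv_sound {W : Type} (R : W → W → Prop) (Ax : Set MForm)
    (h : ∀ A ∈ Ax, MKValid R A) {A : MForm} (hA : MProv Ax A) : MKValid R A := by
  induction hA with
  | axm hm => exact h _ hm
  | pl1 => intro V x a _; exact a
  | pl2 => intro V x a b c; exact a c (b c)
  | pl3 => intro V x a; exact Classical.not_not.mp a
  | kax => intro V x a b y hy; exact a y hy (b y hy)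
  | mp _ _ ih1 ih2 => intro V x; exact ih1 V x (ih2 V x)
  | nec _ ih => intro V x y _; exact ih V y
  | subst σ _ ih => intro V x; exact (MKSat_subst R V σ _ x).2 (ih _ x)

theorem BProv_sound {W : Type} (R : Fin 2 → W → W → Prop) (Ax : Set BForm)
    (h : ∀ A ∈ Ax, BValid R A) {A : BForm} (hA : BProv Ax A) : BValid R A := by
  induction hA with
  | axm hm => exact h _ hm
  | pl1 => intro V x a _; exact a
  | pl2 => intro V x a b c; exact a c (b c)
  | pl3 => intro V x a; exact Classical.not_not.mp a
  | kax => intro V x a b y hy; exact a y hy (b y hy)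
  | mp _ _ ih1 ih2 => intro V x; exact ih1 V x (ih2 V x)
  | nec _ _ ih => intro V x y _; exact ih V y
  | subst σ _ ih => intro V x; exact (BSat_subst R V σ _ x).2 (ih _ x)

/-- The three point frame: a proper `R₁`-cluster `{0,1}` below the `R₁`-maximal point `2`,
with universal second relation. -/
def R3 : Fin 2 → Fin 3 → Fin 3 → Prop :=
  fun i x y => i = 1 ∨ y = 2 ∨ x ≠ 2

theorem S4Ax_valid {W : Type} (R : W → W → Prop) (hr : ∀ x, R x x)
    (ht : ∀ x y z, R x y → R y z → R x z) : ∀ A ∈ S4Ax, MKValid R A := by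
  rintro A (rfl | rfl) V x h
  · exact h x (hr x)
  · intro y hy z hz
    exact h z (ht _ _ _ hy hz)

theorem R3_refl (i : Fin 2) (x : Fin 3) : R3 i x x := by
  unfold R3; tauto

theorem R3_trans (i : Fin 2) (x y z : Fin 3) (h : R3 i x y) (h' : R3 i y z) : R3 i x z := by
  unfold R3 at *; tauto

theorem R3_McK : MKValid (R3 0) McKM := by
  intro V x h h'
  have h2 : R3 0 2 2 := R3_refl 0 2
  have hx2 : R3 0 x 2 := Or.inr (Or.inl rfl)
  have only : ∀ y, R3 0 2 y → y = 2 := by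
    intro y hy; simpa [R3] using hy
  apply h 2 hx2
  intro y hy hp
  apply h' 2 hx2
  intro z hz
  rw [only z hz, ← only y hy]
  exact hp

theorem SepB_not_fusion : SepB ∉ FusionL := by
  intro hmem
  have hv : BValid R3 SepB := by
    refine BProv_sound R3 _ ?_ hmem
    rintro A (⟨B, hB, rfl⟩ | ⟨B, hB, rfl⟩) V x
    · refine (BSat_toB R3 V 0 B x).2 (MProv_sound (R3 0) _ ?_ hB V x)
      rintro C (hC | hC)
      · exact S4Ax_valid _ (R3_refl 0) (R3_trans 0) C hC
      · rw [Set.mem_singleton_iff.1 hC]; exact R3_McK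
    · exact (BSat_toB R3 V 1 B x).2
        (MProv_sound (R3 1) _ (S4Ax_valid _ (R3_refl 1) (R3_trans 1)) hB V x)
  refine hv (fun _ x => x ≠ 0) 0 ?_
  intro y _ hy
  have hg := hy 0 (Or.inl rfl)
  refine hg ?_ rfl
  intro z _ hz hz0
  subst hz0
  have h1 : R3 0 0 1 := by simp [R3]
  have h2 : R3 0 1 0 := by simp [R3]
  exact hz 1 h1 (by simp [pB, BSat]) 0 h2 rfl

/-! ### Topological part -/

/-- A disjoint pair of mutually dense sets, i.e. a splitting of a resolvable subspace. -/
def ResPair {X : Type} [TopologicalSpace X] (q : Set X × Set X) : Prop :=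
  Disjoint q.1 q.2 ∧ q.1 ⊆ closure q.2 ∧ q.2 ⊆ closure q.1

/-- If every point lying in the open set `U` is in the first half of a resolvable pair, then
`U` is contained in the closures of two disjoint sets. -/
theorem exists_dense_pair {X : Type} [TopologicalSpace X] (U : Set X)
    (h : ∀ x ∈ U, ∃ q : Set X × Set X, ResPair q ∧ x ∈ q.1) :
    ∃ N B : Set X, Disjoint N B ∧ U ⊆ closure N ∧ U ⊆ closure B := by
  obtain ⟨m, hm⟩ := zorn_le₀ {q : Set X × Set X | ResPair q} (by
    intro c hc hchain
    refine ⟨(⋃ q ∈ c, q.1, ⋃ q ∈ c, q.2), ⟨?_, ?_, ?_⟩, ?_⟩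
    · rw [Set.disjoint_left]
      intro a ha hb
      simp only [Set.mem_iUnion] at ha hb
      obtain ⟨q, hq, haq⟩ := ha
      obtain ⟨r, hr, har⟩ := hb
      rcases hchain.total hq hr with hle | hle
      · exact Set.disjoint_left.1 (hc hr).1 (hle.1 haq) har
      · exact Set.disjoint_left.1 (hc hq).1 haq (hle.2 har)
    · refine Set.iUnion₂_subset fun q hq => (hc hq).2.1.trans (closure_mono ?_)
      exact Set.subset_biUnion_of_mem (u := fun q : Set X × Set X => q.2) hq
    · refine Set.iUnion₂_subset fun q hq => (hc hq).2.2.trans (closure_mono ?_)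
      exact Set.subset_biUnion_of_mem (u := fun q : Set X × Set X => q.1) hq
    · intro q hq
      exact ⟨Set.subset_biUnion_of_mem (u := fun q : Set X × Set X => q.1) hq,
        Set.subset_biUnion_of_mem (u := fun q : Set X × Set X => q.2) hq⟩)
  obtain ⟨N, B⟩ := m
  obtain ⟨⟨hd, hNB, hBN⟩, hmax⟩ := hm
  simp only at hd hNB hBN
  have hcl : closure N = closure B :=
    subset_antisymm (closure_minimal hNB isClosed_closure) (closure_minimal hBN isClosed_closure)
  have key : U ⊆ closure N := by
    intro x hx
    by_contra hxn
    obtain ⟨⟨N', B'⟩, ⟨hd', hNB', hBN'⟩, hxN'⟩ := h x hx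
    simp only at hd' hNB' hBN' hxN'
    have ho : IsOpen (closure N)ᶜ := isClosed_closure.isOpen_compl
    have step : ∀ C D : Set X, C ⊆ closure D →
        C ∩ (closure N)ᶜ ⊆ closure (D ∩ (closure N)ᶜ) := by
      rintro C D hCD z ⟨hz, hzo⟩
      rw [mem_closure_iff]
      intro O hO hzO
      obtain ⟨w, hw, hwD⟩ := mem_closure_iff.1 (hCD hz) _ (hO.inter ho) ⟨hzO, hzo⟩
      exact ⟨w, hw.1, hwD, hw.2⟩
    have hnew : ResPair (N ∪ (N' ∩ (closure N)ᶜ), B ∪ (B' ∩ (closure N)ᶜ)) := by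
      refine ⟨?_, ?_, ?_⟩
      · rw [Set.disjoint_left]
        rintro a (ha | ha) (hb | hb)
        · exact Set.disjoint_left.1 hd ha hb
        · exact hb.2 (subset_closure ha)
        · exact ha.2 (hcl ▸ subset_closure hb)
        · exact Set.disjoint_left.1 hd' ha.1 hb.1
      · exact Set.union_subset (hNB.trans (closure_mono Set.subset_union_left))
          ((step _ _ hNB').trans (closure_mono Set.subset_union_right))
      · exact Set.union_subset (hBN.trans (closure_mono Set.subset_union_left))
          ((step _ _ hBN').trans (closure_mono Set.subset_union_right))
    have hle := hmax hnew ⟨Set.subset_union_left, Set.subset_union_left⟩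
    exact hxn (subset_closure (hle.1 (Or.inr ⟨hxN', hxn⟩)))
  exact ⟨N, B, hd, key, hcl ▸ key⟩

/-- In a space validating the McKinsey axiom no nonempty open set is covered by the closures of
two disjoint sets. -/
theorem McK_irresolvable {X : Type} [t : TopologicalSpace X] (h : MTValid t McKM)
    (U : Set X) (hU : IsOpen U) (x : X) (hx : x ∈ U) (N B : Set X) (hd : Disjoint N B)
    (hN : U ⊆ closure N) (hB : U ⊆ closure B) : False := by
  refine h (fun _ z => z ∈ N) x ?_ ?_
  · refine ⟨U, hU, hx, ?_⟩
    rintro z hz ⟨O, hO, hzO, hON⟩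
    obtain ⟨w, hw, hwN⟩ := mem_closure_iff.1 (hN hz) O hO hzO
    exact hON w hw hwN
  · refine ⟨U, hU, hx, ?_⟩
    rintro z hz ⟨O, hO, hzO, hON⟩
    obtain ⟨w, hw, hwB⟩ := mem_closure_iff.1 (hB hz) O hO hzO
    exact Set.disjoint_left.1 hd (hON w hw) hwB

theorem horiz_box {X Y : Type} (t : TopologicalSpace X) (P : X × Y → Prop) (x : X) (y : Y) :
    (∃ U : Set (X × Y), (horiz t).IsOpen U ∧ (x, y) ∈ U ∧ ∀ z ∈ U, P z) ↔
      ∃ U : Set X, IsOpen U ∧ x ∈ U ∧ ∀ z ∈ U, P (z, y) := by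
  constructor
  · rintro ⟨U, hU, hxU, hP⟩
    have hc : @Continuous X (X × Y) t (horiz t) (fun z => (z, y)) := by
      refine continuous_generateFrom_iff.2 ?_
      rintro _ ⟨V, y', hV, rfl⟩
      by_cases hy : y = y'
      · have : (fun z : X => (z, y)) ⁻¹' (V ×ˢ ({y'} : Set Y)) = V := by
          ext z; simp [hy]
        rw [this]; exact hV
      · have : (fun z : X => (z, y)) ⁻¹' (V ×ˢ ({y'} : Set Y)) = ∅ := by
          ext z; simp [hy]
        rw [this]; exact isOpen_empty
    exact ⟨_, (@Continuous.isOpen_preimage _ _ t (horiz t) _ hc U hU), hxU, fun z hz => hP _ hz⟩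
  · rintro ⟨U, hU, hxU, hP⟩
    refine ⟨U ×ˢ {y}, TopologicalSpace.GenerateOpen.basic _ ⟨U, y, hU, rfl⟩, ⟨hxU, rfl⟩, ?_⟩
    rintro ⟨z, y'⟩ ⟨hz, hy⟩
    obtain rfl : y' = y := hy
    exact hP z hz

/-- A point refuting Grz lies in a resolvable subspace. -/
theorem resPair_of_not_grz {X : Type} [TopologicalSpace X] (P : Set X) (x : X) (hx : x ∉ P)
    (V : Set X) (hV : IsOpen V) (hxV : x ∈ V)
    (h : ∀ z ∈ V, (∃ O, IsOpen O ∧ z ∈ O ∧ ∀ w ∈ O, w ∈ P → ∃ O', IsOpen O' ∧ w ∈ O' ∧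
      ∀ v ∈ O', v ∈ P) → z ∈ P) :
    ∃ q : Set X × Set X, ResPair q ∧ x ∈ q.1 := by
  refine ⟨(V \ P, (V ∩ P) \ interior P), ⟨?_, ?_, ?_⟩, hxV, hx⟩
  · rw [Set.disjoint_left]
    exact fun a ha hb => ha.2 hb.1.2
  · rintro z ⟨hzV, hzP⟩
    rw [mem_closure_iff]
    intro O hO hzO
    by_contra hne
    refine hzP (h z hzV ⟨O ∩ V, hO.inter hV, ⟨hzO, hzV⟩, fun w hw hwP => ?_⟩)
    by_contra hwi
    refine hne ⟨w, hw.1, ⟨hw.2, hwP⟩, fun hi => hwi ?_⟩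
    exact ⟨interior P, isOpen_interior, hi, fun v hv => interior_subset hv⟩
  · rintro z ⟨⟨hzV, hzP⟩, hzi⟩
    rw [mem_closure_iff]
    intro O hO hzO
    by_contra hne
    refine hzi (mem_interior.2 ⟨O ∩ V, fun w hw => ?_, hO.inter hV, hzO, hzV⟩)
    by_contra hwP
    exact hne ⟨w, hw.1, hw.2, hwP⟩

theorem SepB_topProd : SepB ∈ TopProdLogic S41L S4L := by
  intro X Y t1 t2 _ _ h1 _ V q hq
  obtain ⟨x, y⟩ := q
  have hMcK : MTValid t1 McKM := h1 _ (MProv.axm (Or.inr rfl))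
  obtain ⟨U, hU, hxU, hUq⟩ := (horiz_box t1
    (fun z => BTSat ![horiz t1, vert t2] V z (BForm.box 1 GrzB).neg) x y).1 hq
  obtain ⟨N, B, hd, hN, hB⟩ := exists_dense_pair U (by
    intro x' hx'
    have hnb := hUq x' hx'
    by_contra hno
    refine hnb ⟨{x'} ×ˢ Set.univ,
      TopologicalSpace.GenerateOpen.basic _ ⟨x', Set.univ, isOpen_univ, rfl⟩,
      ⟨rfl, trivial⟩, ?_⟩
    rintro ⟨x'', y'⟩ ⟨hx'', _⟩
    obtain rfl : x'' = x' := hx''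
    intro hbox
    by_contra hp
    obtain ⟨W, hW, hxW, hWq⟩ := (horiz_box t1
      (fun z => BTSat ![horiz t1, vert t2] V z
        ((BForm.box 0 (pB.imp (BForm.box 0 pB))).imp pB)) x'' y').1 hbox
    refine hno (resPair_of_not_grz {z | V 0 (z, y')} x'' hp W hW hxW ?_)
    intro z hz hO
    refine hWq z hz ((horiz_box t1
      (fun z => BTSat ![horiz t1, vert t2] V z (pB.imp (BForm.box 0 pB))) z y').2 ?_)
    obtain ⟨O, hO, hzO, hOP⟩ := hO
    refine ⟨O, hO, hzO, fun w hw hwP => ?_⟩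
    exact (horiz_box t1 (fun z => BTSat ![horiz t1, vert t2] V z pB) w y').2 (hOP w hw hwP))
  exact McK_irresolvable hMcK U hU x hxU N B hd hN hB

/-- the topological product S4.1 ×ₜ S4 differs from the fusion
S4.1 ∗ S4. -/
theorem topProd_ne_fusion :
    TopProdLogic S41L S4L ≠ FusionL := by
  intro h
  exact SepB_not_fusion (h ▸ SepB_topProd)
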